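/- Let F = (f₁,…,f_k) : ℝ^n → ℝ^k, k ≤ n, be a polynomial mapping with every f_j nonconstant and f_j(0) = 0, and suppose every f_j is convenient. If F is non-degenerate at infinity in the sense of Bivià-Ausina, then F is non-degenerate at infinity. -/

import Mathlib

open MvPolynomial Filter

/-- The linear form `l_p(ν) = ∑ i, p i * ν i`. -/
def lP {n : ℕ} (p : Fin n → ℤ) (ν : Fin n →₀ ℕ) : ℤ := ∑ i, p i * (ν i : ℤ)

/-- `d_p(f)`: the minimum of `l_p` over `{0} ∪ supp(f)`. -/
noncomputable def dP {n : ℕ} (p : Fin n → ℤ) (f : MvPolynomial (Fin n) ℝ) : ℤ :=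
  (insert (0 : Fin n →₀ ℕ) f.support).inf' (Finset.insert_nonempty _ _) (lP p)

/-- The face polynomial `f_p`: the sum of the monomials of `f` whose exponent `ν`
satisfies `l_p(ν) = d_p(f)` (zero if no `ν ∈ supp(f)` attains the minimum). -/
noncomputable def facePoly {n : ℕ} (p : Fin n → ℤ) (f : MvPolynomial (Fin n) ℝ) :
    MvPolynomial (Fin n) ℝ :=
  ∑ ν ∈ f.support.filter (fun ν => lP p ν = dP p f), monomial ν (coeff ν f)

/-- The gradient vector of a polynomial at a point (as a plain vector of `ℝⁿ`). -/
noncomputable def rgradV {n : ℕ} (f : MvPolynomial (Fin n) ℝ) (x : Fin n → ℝ) :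
    Fin n → ℝ :=
  fun i => eval x (pderiv i f)

/-- `I_p = {j : d_p(f_j) < 0}`. -/
noncomputable def Iset {n k : ℕ} (p : Fin n → ℤ) (f : Fin k → MvPolynomial (Fin n) ℝ) :
    Set (Fin k) :=
  { j | dP p (f j) < 0 }

/-- `J_p = {j : l_p(ν) > 0 for all ν ∈ supp(f_j)}`. -/
def Jset {n k : ℕ} (p : Fin n → ℤ) (f : Fin k → MvPolynomial (Fin n) ℝ) :
    Set (Fin k) :=
  { j | ∀ ν ∈ (f j).support, 0 < lP p ν }

/-- `F` is non-degenerate at infinity. -/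
noncomputable def NondegAtInfinity {n k : ℕ} (f : Fin k → MvPolynomial (Fin n) ℝ) :
    Prop :=
  ∀ p : Fin n → ℤ, (∃ i, p i < 0) → (Iset p f).Nonempty → Jset p f = ∅ →
    ∀ x : Fin n → ℝ, (∀ i, x i ≠ 0) →
      (∀ j ∈ Iset p f, eval x (facePoly p (f j)) = 0) →
      LinearIndependent ℝ (fun j : Iset p f => rgradV (facePoly p (f j)) x)

/-- `f` is convenient: its support meets every coordinate axis. -/
def Convenient {n : ℕ} (f : MvPolynomial (Fin n) ℝ) : Prop :=
  ∀ i : Fin n, ∃ m : ℕ, 1 ≤ m ∧ Finsupp.single i m ∈ f.support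

/-- `F` is non-degenerate at infinity in the sense of Bivià-Ausina. -/
noncomputable def BANondegAtInfinity {n k : ℕ} (f : Fin k → MvPolynomial (Fin n) ℝ) :
    Prop :=
  ∀ p : Fin n → ℤ, (∃ i, p i < 0) →
    ¬ ∃ x : Fin n → ℝ, (∀ i, x i ≠ 0) ∧ ∀ j, eval x (facePoly p (f j)) = 0

/-- For `F : ℝⁿ → ℝᵏ`, `k ≤ n`, with all components nonconstant,
vanishing at `0` and convenient, Bivià-Ausina non-degeneracy at infinity implies
non-degeneracy at infinity. -/
theorem nondeg_of_BAnondeg {n k : ℕ} (hkn : k ≤ n)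
    (f : Fin k → MvPolynomial (Fin n) ℝ)
    (hnc : ∀ j, (f j).totalDegree ≠ 0)
    (h0 : ∀ j, eval (0 : Fin n → ℝ) (f j) = 0)
    (hconv : ∀ j, Convenient (f j))
    (hba : BANondegAtInfinity f) :
    NondegAtInfinity f := by
  intro p hp _ _ x hx hz
  refine absurd ⟨x, hx, fun j => hz j ?_⟩ (hba p hp)
  obtain ⟨i, hi⟩ := hp
  obtain ⟨m, hm, hs⟩ := hconv j i
  have h1 : dP p (f j) ≤ lP p (Finsupp.single i m) :=
    Finset.inf'_le _ (Finset.mem_insert_of_mem hs)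
  have h2 : lP p (Finsupp.single i m) = p i * (m : ℤ) := by
    unfold lP
    rw [Finset.sum_eq_single i]
    · simp
    · intro b _ hb
      simp [Finsupp.single_eq_of_ne hb]
    · simp
  have h3 : p i * (m : ℤ) < 0 := mul_neg_of_neg_of_pos hi (by exact_mod_cast hm)
  show dP p (f j) < 0
  linarith
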